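/- arXiv:1001.3802 — 2 statements merged into one kernel-verified Lean document; each statement's English description precedes it below -/
import Mathlib

section
/- Let (Ω, 𝒢) be a measurable space, P a probability measure on 𝒢, and (F_t)_{t∈[0,1]} a filtration of sub-σ-algebras of 𝒢. Let (F̄ᴾ_t)_{t∈[0,1]} be the augmented filtration, where F̄ᴾ_t is the σ-algebra generated by F_t together with all P-null sets of 𝒢. If X : [0,1] × Ω → ℝ is progressively measurable with respect to (F̄ᴾ_t), then there exists a process X̃ : [0,1] × Ω → ℝ that is progressively measurable with respect to (F_t) and satisfies X̃ = X (Lebesgue ⊗ P)-almost everywhere on [0,1] × Ω; X̃ is unique up to (Lebesgue ⊗ P)-null sets. Moreover, if for P-almost every ω the path t ↦ X_t(ω) is continuous, then X̃ can be chosen so that for P-almost every ω the path t ↦ X̃_t(ω) is continuous. -/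
open MeasureTheory

/-- The `P`-augmentation of a filtration on `[0,1]`: each `F t` is enlarged by the
σ-algebra generated by the `P`-null sets of the ambient σ-algebra. -/
def augFiltration {Ω : Type*} {𝒢 : MeasurableSpace Ω} (P : Measure Ω)
    (F : Filtration unitInterval 𝒢) : Filtration unitInterval 𝒢 where
  seq t := F t ⊔ MeasurableSpace.generateFrom {N : Set Ω | MeasurableSet[𝒢] N ∧ P N = 0}
  mono' := fun _ _ hst => sup_le_sup_right (F.mono hst) _
  le' := fun t => sup_le (F.le t)
    (MeasurableSpace.generateFrom_le fun _ hs => hs.1)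

/-- Lebesgue measure on the unit interval, as a measure on the subtype `[0,1]`. -/
noncomputable def lebIcc : Measure unitInterval :=
  (volume : Measure ℝ).comap Subtype.val


open Filter Topology

lemma aux_version_set {Ω : Type*} {𝒢 : MeasurableSpace Ω} (P : Measure Ω)
    (m : MeasurableSpace Ω) (s : Set Ω)
    (hs : MeasurableSet[m ⊔ MeasurableSpace.generateFrom
      {N : Set Ω | MeasurableSet[𝒢] N ∧ P N = 0}] s) :
    ∃ t, MeasurableSet[m] t ∧ s =ᵐ[P] t := by
  have hle : m ⊔ MeasurableSpace.generateFrom {N : Set Ω | MeasurableSet[𝒢] N ∧ P N = 0}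
      ≤ eventuallyMeasurableSpace m (ae P) := by
    refine sup_le le_eventuallyMeasurableSpace (MeasurableSpace.generateFrom_le ?_)
    rintro N ⟨-, hN⟩
    exact ⟨∅, MeasurableSet.empty, ae_eq_empty.2 hN⟩
  exact hle s hs

lemma aux_version_fun {Ω : Type*} {𝒢 : MeasurableSpace Ω} (P : Measure Ω)
    (m : MeasurableSpace Ω) (f : Ω → ℝ)
    (hf : Measurable[m ⊔ MeasurableSpace.generateFrom
      {N : Set Ω | MeasurableSet[𝒢] N ∧ P N = 0}] f) :
    ∃ g : Ω → ℝ, Measurable[m] g ∧ f =ᵐ[P] g := by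
  classical
  have key : ∀ φ : @SimpleFunc Ω (m ⊔ MeasurableSpace.generateFrom
      {N : Set Ω | MeasurableSet[𝒢] N ∧ P N = 0}) ℝ,
      ∃ g : Ω → ℝ, Measurable[m] g ∧ φ =ᵐ[P] g := by
    intro φ
    induction φ using SimpleFunc.induction' with
    | const c => exact ⟨fun _ => c, measurable_const, EventuallyEq.rfl⟩
    | @pcw f g s hs hf hg =>
      obtain ⟨f', hf', hff⟩ := hf
      obtain ⟨g', hg', hgg⟩ := hg
      obtain ⟨t, ht, hst⟩ := aux_version_set P m s hs
      refine ⟨t.piecewise f' g', Measurable.piecewise ht hf' hg', ?_⟩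
      filter_upwards [hff, hgg, hst] with x h1 h2 h3
      have h3' : (x ∈ s) = (x ∈ t) := h3
      simp only [SimpleFunc.coe_piecewise, Set.piecewise, h3', h1, h2]
  have hsm := hf.stronglyMeasurable
  choose g hg hfg using fun n => key (hsm.approx n)
  refine ⟨fun x => limsup (fun n => g n x) atTop, Measurable.limsup hg, ?_⟩
  filter_upwards [ae_all_iff.2 hfg] with x hx
  have := hsm.tendsto_approx x
  simp only [hx] at this
  exact this.limsup_eq.symm

/-- grid times -/
noncomputable def gridTime (n k : ℕ) : unitInterval :=
  Set.projIcc (0 : ℝ) 1 zero_le_one ((k : ℝ) / (n + 1))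

/-- grid index of a time -/
noncomputable def gridIdx (n : ℕ) (t : unitInterval) : ℕ := ⌊((n : ℝ) + 1) * t⌋₊

lemma gridTime_idx_le (n : ℕ) (t : unitInterval) : gridTime n (gridIdx n t) ≤ t := by
  have h : ((gridIdx n t : ℕ) : ℝ) / (n + 1) ≤ t := by
    rw [div_le_iff₀ (by positivity), mul_comm]
    exact Nat.floor_le (mul_nonneg (by positivity) t.2.1)
  have := Set.monotone_projIcc (zero_le_one (α := ℝ)) h
  rwa [Set.projIcc_val] at this

lemma measurable_gridIdx (n : ℕ) : Measurable (gridIdx n) := by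
  unfold gridIdx
  exact Nat.measurable_floor.comp (measurable_const.mul measurable_subtype_coe)

lemma aux_glue {Ω : Type*} [𝒢 : MeasurableSpace Ω] (P : Measure Ω)
    (F : Filtration unitInterval 𝒢) (W : ℕ → ℕ → Ω → ℝ)
    (hW : ∀ n k, Measurable[augFiltration P F (gridTime n k)] (W n k)) :
    ∃ X' : unitInterval → Ω → ℝ, IsStronglyProgressive F X' ∧
      ∀ᵐ ω ∂P, ∀ t l, Tendsto (fun n => W n (gridIdx n t) ω) atTop (𝓝 l) → X' t ω = l := by
  classical
  choose Y hY hWY using fun n k => aux_version_fun P (F (gridTime n k)) (W n k) (hW n k)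
  refine ⟨fun t ω => limsup (fun n => Y n (gridIdx n t) ω) atTop, ?_, ?_⟩
  · intro i
    let _ : MeasurableSpace Ω := F i
    refine Measurable.stronglyMeasurable (Measurable.limsup fun n => ?_)
    have h1 : Measurable (fun p : ℕ × Ω => if gridTime n p.1 ≤ i then Y n p.1 p.2 else 0) := by
      refine measurable_from_prod_countable_right fun k => ?_
      by_cases h : gridTime n k ≤ i
      · simp only [h, if_true]
        exact (hY n k).mono (F.mono h) le_rfl
      · simp only [h, if_false]
        exact measurable_const
    have h2 : Measurable (fun p : Set.Iic i × Ω => (gridIdx n (p.1 : unitInterval), p.2)) :=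
      ((measurable_gridIdx n).comp (measurable_subtype_coe.comp measurable_fst)).prodMk
        measurable_snd
    suffices hs : (fun p : Set.Iic i × Ω => Y n (gridIdx n (p.1 : unitInterval)) p.2) =
        (fun p : ℕ × Ω => if gridTime n p.1 ≤ i then Y n p.1 p.2 else 0) ∘
          (fun p : Set.Iic i × Ω => (gridIdx n (p.1 : unitInterval), p.2)) by
      rw [hs]
      exact h1.comp h2
    funext p
    have : gridTime n (gridIdx n (p.1 : unitInterval)) ≤ i := (gridTime_idx_le n _).trans p.1.2
    simp [this]
  · filter_upwards [ae_all_iff.2 fun n => ae_all_iff.2 fun k => hWY n k] with ω hω t l h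
    simp only [hω] at h
    exact h.limsup_eq

lemma prog_joint {Ω : Type*} [𝒢 : MeasurableSpace Ω] (F : Filtration unitInterval 𝒢)
    (X : unitInterval → Ω → ℝ) (hX : IsStronglyProgressive F X) (τ : unitInterval) :
    Measurable[MeasurableSpace.prod inferInstance (F τ)]
      (fun p : ℝ × Ω => X (min (Set.projIcc (0 : ℝ) 1 zero_le_one p.1) τ) p.2) := by
  have h := (hX τ).measurable
  let _ : MeasurableSpace Ω := F τ
  have h2 : Measurable (fun p : ℝ × Ω =>
      ((⟨min (Set.projIcc (0 : ℝ) 1 zero_le_one p.1) τ, Set.mem_Iic.2 (min_le_right _ _)⟩ : Set.Iic τ), p.2)) := by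
    refine Measurable.prodMk (Measurable.subtype_mk ?_) measurable_snd
    exact ((continuous_projIcc.measurable).comp measurable_fst).min measurable_const
  exact h.comp h2

lemma prog_joint_one {Ω : Type*} [𝒢 : MeasurableSpace Ω] (F : Filtration unitInterval 𝒢)
    (X : unitInterval → Ω → ℝ) (hX : IsStronglyProgressive F X) :
    Measurable (fun p : ℝ × Ω => X (Set.projIcc (0 : ℝ) 1 zero_le_one p.1) p.2) := by
  have h := prog_joint F X hX 1
  have h' := h.mono (sup_le_sup le_rfl (MeasurableSpace.comap_mono (F.le 1))) le_rfl
  have e : ∀ u : unitInterval, min u 1 = u := fun u => min_eq_left unitInterval.le_one'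
  simp only [e] at h'
  exact h'

lemma prog_joint_unit {Ω : Type*} [𝒢 : MeasurableSpace Ω] (F : Filtration unitInterval 𝒢)
    (X : unitInterval → Ω → ℝ) (hX : IsStronglyProgressive F X) :
    Measurable (fun p : unitInterval × Ω => X p.1 p.2) := by
  have := (prog_joint_one F X hX).comp
    ((measurable_subtype_coe.comp measurable_fst).prodMk measurable_snd :
      Measurable (fun p : unitInterval × Ω => ((p.1 : ℝ), p.2)))
  convert this using 2 with p
  simp [Set.projIcc_val]

lemma ae_of_ae_ae {Ω : Type*} [𝒢 : MeasurableSpace Ω] (P : Measure Ω) [IsProbabilityMeasure P]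
    (F : Filtration unitInterval 𝒢) (X X' : unitInterval → Ω → ℝ)
    (hX : IsStronglyProgressive (augFiltration P F) X) (hX' : IsStronglyProgressive F X')
    (h : ∀ᵐ ω ∂P, ∀ᵐ t ∂lebIcc, X' t ω = X t ω) :
    (fun p : unitInterval × Ω => X' p.1 p.2) =ᵐ[lebIcc.prod P]
          fun p : unitInterval × Ω => X p.1 p.2 := by
  have e : lebIcc = (volume : Measure unitInterval) := rfl
  rw [e] at h ⊢
  have hm : MeasurableSet {p : unitInterval × Ω | X' p.1 p.2 = X p.1 p.2} :=
    measurableSet_eq_fun (prog_joint_unit _ _ hX') (prog_joint_unit _ _ hX)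
  exact (Measure.ae_prod_iff_ae_ae hm).2 ((Measure.ae_ae_comm hm).2 h)

lemma tendsto_gridTime (t : unitInterval) :
    Tendsto (fun n => gridTime n (gridIdx n t)) atTop (𝓝 t) := by
  have h : Tendsto (fun n : ℕ => ((gridIdx n t : ℕ) : ℝ) / (n + 1)) atTop (𝓝 (t : ℝ)) := by
    have h1 := (tendsto_nat_floor_mul_div_atTop (R := ℝ) t.2.1).comp
      (tendsto_natCast_atTop_atTop.comp (tendsto_add_atTop_nat 1))
    refine h1.congr fun n => ?_
    simp [gridIdx, mul_comm]
  have := (continuous_projIcc (h := zero_le_one (α := ℝ))).continuousAt.tendsto.comp h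
  rwa [Set.projIcc_val] at this

lemma aux_cont {Ω : Type*} [𝒢 : MeasurableSpace Ω] (P : Measure Ω) [IsProbabilityMeasure P]
    (F : Filtration unitInterval 𝒢) (X : unitInterval → Ω → ℝ)
    (hX : IsStronglyProgressive (augFiltration P F) X)
    (hc : ∀ᵐ ω ∂P, Continuous fun t : unitInterval => X t ω) :
    ∃ X' : unitInterval → Ω → ℝ, IsStronglyProgressive F X' ∧
          ((fun p : unitInterval × Ω => X' p.1 p.2) =ᵐ[lebIcc.prod P]
            fun p : unitInterval × Ω => X p.1 p.2) ∧
          ∀ᵐ ω ∂P, Continuous fun t : unitInterval => X' t ω := by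
  obtain ⟨X', h1, h2⟩ := aux_glue P F (fun n k => X (gridTime n k))
    (fun n k => (hX.stronglyAdapted _).measurable)
  have h3 : ∀ᵐ ω ∂P, ∀ t, X' t ω = X t ω := by
    filter_upwards [h2, hc] with ω hω hcω t
    exact hω t _ (hcω.continuousAt.tendsto.comp (tendsto_gridTime t))
  refine ⟨X', h1, ae_of_ae_ae P F X X' hX h1 ?_, ?_⟩
  · filter_upwards [h3] with ω hω using ae_of_all _ hω
  · filter_upwards [h3, hc] with ω hω hcω
    simpa only [hω] using hcω

lemma aux_bdd {Ω : Type*} [𝒢 : MeasurableSpace Ω] (P : Measure Ω) [IsProbabilityMeasure P]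
    (F : Filtration unitInterval 𝒢) (X : unitInterval → Ω → ℝ)
    (hX : IsStronglyProgressive (augFiltration P F) X) (C : ℝ) (hC : ∀ t ω, |X t ω| ≤ C) :
    ∃ X' : unitInterval → Ω → ℝ, IsStronglyProgressive F X' ∧
          ((fun p : unitInterval × Ω => X' p.1 p.2) =ᵐ[lebIcc.prod P]
            fun p : unitInterval × Ω => X p.1 p.2) := by
  set c : ℕ → ℕ → ℝ := fun n k => ((k : ℝ) - 1 / 2) / (n + 1) with hc
  set r : ℕ → ℝ := fun n => 1 / (2 * ((n : ℝ) + 1)) with hr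
  obtain ⟨X', h1, h2⟩ := aux_glue P F
    (fun n k ω => ⨍ s in Metric.closedBall (c n k) (r n),
      X (Set.projIcc (0 : ℝ) 1 zero_le_one s) ω) (by
    intro n k
    have hm := prog_joint _ X hX (gridTime n k)
    have heq : (fun ω => ⨍ s in Metric.closedBall (c n k) (r n),
        X (Set.projIcc (0 : ℝ) 1 zero_le_one s) ω) =
        fun ω => (volume.real (Metric.closedBall (c n k) (r n)))⁻¹ •
          ∫ s in Metric.closedBall (c n k) (r n),
        X (min (Set.projIcc (0 : ℝ) 1 zero_le_one s) (gridTime n k)) ω := by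
      funext ω
      rw [setAverage_eq]
      congr 1
      refine setIntegral_congr_fun measurableSet_closedBall fun s hs => ?_
      have hs' : s ≤ (k : ℝ) / (n + 1) := by
        rw [Metric.mem_closedBall, Real.dist_eq] at hs
        have h3 := (abs_le.1 hs).2
        have h4 : c n k + r n = (k : ℝ) / (n + 1) := by
          simp only [hc, hr]; field_simp; ring
        linarith
      have h5 : Set.projIcc (0 : ℝ) 1 zero_le_one s ≤ gridTime n k :=
        Set.monotone_projIcc _ hs'
      simp only [min_eq_left h5]
    rw [heq]
    let _ : MeasurableSpace Ω := augFiltration P F (gridTime n k)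
    have := hm.stronglyMeasurable.integral_prod_left'
      (μ := volume.restrict (Metric.closedBall (c n k) (r n)))
    exact (this.measurable).const_smul (volume.real (Metric.closedBall (c n k) (r n)))⁻¹)
  refine ⟨X', h1, ae_of_ae_ae P F X X' hX h1 ?_⟩
  filter_upwards [h2] with ω hω
  have hmeas : Measurable (fun s : ℝ => X (Set.projIcc (0 : ℝ) 1 zero_le_one s) ω) :=
    (prog_joint_one _ X hX).comp (measurable_id.prodMk measurable_const)
  have hloc : LocallyIntegrable (fun s : ℝ => X (Set.projIcc (0 : ℝ) 1 zero_le_one s) ω) := by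
    refine (locallyIntegrable_const C).mono hmeas.aestronglyMeasurable (ae_of_all _ fun s => ?_)
    rw [Real.norm_eq_abs, Real.norm_eq_abs]
    exact (hC _ _).trans (le_abs_self _)
  have hleb := IsUnifLocDoublingMeasure.ae_tendsto_average (μ := (volume : Measure ℝ)) hloc 3
  have hmp : MeasurePreserving (Subtype.val : unitInterval → ℝ) lebIcc
      (volume.restrict unitInterval) := measurePreserving_subtype_coe measurableSet_Icc
  have hleb' := hmp.quasiMeasurePreserving.ae (ae_restrict_of_ae hleb)
  filter_upwards [hleb'] with t ht
  have hδ : Tendsto r atTop (𝓝[>] 0) := by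
    refine tendsto_nhdsWithin_iff.2 ⟨?_, Eventually.of_forall fun n => ?_⟩
    · have := (tendsto_one_div_add_atTop_nhds_zero_nat (𝕜 := ℝ)).const_mul (1 / 2)
      rw [mul_zero] at this
      refine this.congr fun n => ?_
      simp only [hr]; field_simp
    · simp only [hr, Set.mem_Ioi]; positivity
  have := ht (l := atTop) (fun n => c n (gridIdx n t)) r hδ (Eventually.of_forall fun n => by
    have hn : (0 : ℝ) < n + 1 := by positivity
    have a1 : ((gridIdx n t : ℕ) : ℝ) ≤ (n + 1) * t :=
      Nat.floor_le (mul_nonneg hn.le t.2.1)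
    have a2 : ((n : ℝ) + 1) * t < (gridIdx n t : ℕ) + 1 := Nat.lt_floor_add_one _
    rw [Metric.mem_closedBall, Real.dist_eq]
    have e1 : (t : ℝ) - c n (gridIdx n t) = ((n + 1) * t - (gridIdx n t - 1 / 2)) / (n + 1) := by
      simp only [hc]; field_simp
    have e2 : 3 * r n = (3 / 2) / (n + 1) := by
      simp only [hr]; field_simp
    rw [e1, e2, abs_div, abs_of_pos hn]
    gcongr
    rw [abs_le]
    constructor <;> linarith)
  rw [Set.projIcc_val] at this
  exact hω t _ this

lemma aux_exists {Ω : Type*} [𝒢 : MeasurableSpace Ω] (P : Measure Ω) [IsProbabilityMeasure P]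
    (F : Filtration unitInterval 𝒢) (X : unitInterval → Ω → ℝ)
    (hX : IsStronglyProgressive (augFiltration P F) X) :
    ∃ X' : unitInterval → Ω → ℝ, IsStronglyProgressive F X' ∧
          ((fun p : unitInterval × Ω => X' p.1 p.2) =ᵐ[lebIcc.prod P]
            fun p : unitInterval × Ω => X p.1 p.2) := by
  obtain ⟨Z, hZ, hZX⟩ := aux_bdd P F (fun t ω => Real.arctan (X t ω))
    (fun i => Real.continuous_arctan.comp_stronglyMeasurable (hX i)) (Real.pi / 2)
    (fun t ω => abs_le.2 ⟨(Real.neg_pi_div_two_lt_arctan _).le, (Real.arctan_lt_pi_div_two _).le⟩)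
  have htan : Measurable Real.tan := by
    have : Real.tan = fun x => Real.sin x / Real.cos x := funext Real.tan_eq_sin_div_cos
    rw [this]
    exact Real.measurable_sin.div Real.measurable_cos
  refine ⟨fun t ω => Real.tan (Z t ω), fun i => ?_, ?_⟩
  · exact (htan.comp (hZ i).measurable).stronglyMeasurable
  · filter_upwards [hZX] with p hp
    rw [hp, Real.tan_arctan]

/-- a process progressively measurable for the `P`-augmented filtration admits
an `(F_t)`-progressively measurable version, unique up to `Lebesgue ⊗ P`-null sets;
if the original process has `P`-a.s. continuous paths, the version can be chosen with
`P`-a.s. continuous paths as well. -/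
theorem stmt_1 {Ω : Type*} [𝒢 : MeasurableSpace Ω]
    (P : Measure Ω) [IsProbabilityMeasure P]
    (F : Filtration unitInterval 𝒢)
    (X : unitInterval → Ω → ℝ)
    (hX : ProgMeasurable (augFiltration P F) X) :
    (∃ X' : unitInterval → Ω → ℝ, ProgMeasurable F X' ∧
        (fun p : unitInterval × Ω => X' p.1 p.2) =ᵐ[lebIcc.prod P]
          fun p : unitInterval × Ω => X p.1 p.2) ∧
      (∀ X₁ X₂ : unitInterval → Ω → ℝ, ProgMeasurable F X₁ → ProgMeasurable F X₂ →
        ((fun p : unitInterval × Ω => X₁ p.1 p.2) =ᵐ[lebIcc.prod P]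
          fun p : unitInterval × Ω => X p.1 p.2) →
        ((fun p : unitInterval × Ω => X₂ p.1 p.2) =ᵐ[lebIcc.prod P]
          fun p : unitInterval × Ω => X p.1 p.2) →
        ((fun p : unitInterval × Ω => X₁ p.1 p.2) =ᵐ[lebIcc.prod P]
          fun p : unitInterval × Ω => X₂ p.1 p.2)) ∧
      ((∀ᵐ ω ∂P, Continuous fun t : unitInterval => X t ω) →
        ∃ X' : unitInterval → Ω → ℝ, ProgMeasurable F X' ∧
          ((fun p : unitInterval × Ω => X' p.1 p.2) =ᵐ[lebIcc.prod P]
            fun p : unitInterval × Ω => X p.1 p.2) ∧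
          ∀ᵐ ω ∂P, Continuous fun t : unitInterval => X' t ω) := by
  exact ⟨aux_exists P F X hX, fun X₁ X₂ _ _ h1 h2 => h1.trans h2.symm, aux_cont P F X hX⟩
end

section
/- Let (Ω, 𝒢, P) be a probability space with a filtration (F_t)_{t∈[0,1]}. For i = 1, 2, let M₀^i be F₀-measurable with E[(M₀^i)²] < ∞; let N^i be a martingale with respect to (F_t) under P with continuous paths, N₀^i = 0, and E[(N_t^i)²] < ∞ for all t; let K^i be (F_t)-adapted with continuous nondecreasing paths, K₀^i = 0, and E[(K₁^i)²] < ∞; set M^i_t := M₀^i + N^i_t − K^i_t and assume E[ sup_{t∈[0,1]} (M^i_t)² ] < ∞. Write δM := M¹ − M², δN := N¹ − N², δK := K¹ − K². Then there exists a universal constant C (independent of the probability space, the filtration and the processes) such that E[(δN₁)²] + E[ sup_{t∈[0,1]} (δK_t)² ] ≤ C · ( E[ sup_{t∈[0,1]} (δM_t)² ] + ( E[ sup_{t∈[0,1]} (δM_t)² ] )^{1/2} · ( ( E[(K₁¹)²] )^{1/2} + ( E[(K₁²)²] )^{1/2} ) ). -/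
open MeasureTheory

namespace Aux15

open Filter Topology

/-- running maximum -/
noncomputable def rmax (s : ℕ → ℝ) : ℕ → ℝ
  | 0 => s 0
  | k + 1 => max (rmax s k) (s (k + 1))

lemma le_rmax (s : ℕ → ℝ) {k n : ℕ} (h : k ≤ n) : s k ≤ rmax s n := by
  induction n with
  | zero => obtain rfl : k = 0 := by omega
            exact le_rfl
  | succ n ih =>
    rcases Nat.lt_or_ge n k with h1 | h1
    · obtain rfl : k = n + 1 := by omega
      exact le_max_right _ _
    · exact (ih h1).trans (le_max_left _ _)

lemma rmax_le (s : ℕ → ℝ) {n : ℕ} {a : ℝ} (h : ∀ k ≤ n, s k ≤ a) : rmax s n ≤ a := by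
  induction n with
  | zero => exact h 0 le_rfl
  | succ n ih =>
    exact max_le (ih fun k hk => h k (by omega)) (h _ le_rfl)

/-- the sign times the running maximum -/
noncomputable def dY (x : ℕ → ℝ) (k : ℕ) : ℝ :=
  (if 0 ≤ x k then 1 else -1) * rmax (fun j => |x j|) k

lemma doob_path (x : ℕ → ℝ) (n : ℕ) :
    (rmax (fun j => |x j|) n) ^ 2 ≤
      4 * x n ^ 2 - 4 * ∑ k ∈ Finset.range n, dY x k * (x (k + 1) - x k) := by
  have key : ∑ k ∈ Finset.range n, dY x k * (x (k + 1) - x k) ≤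
      rmax (fun j => |x j|) n * |x n| - (rmax (fun j => |x j|) n) ^ 2 / 2 := by
    induction n with
    | zero => simp [rmax]; nlinarith [sq_abs (x 0), sq_nonneg (x 0)]
    | succ n ih =>
      rw [Finset.sum_range_succ]
      have h0 : |x n| ≤ rmax (fun j => |x j|) n := le_rmax (fun j => |x j|) le_rfl
      have hn := abs_nonneg (x n)
      have h1 : dY x n * (x (n + 1) - x n) ≤
          rmax (fun j => |x j|) n * (|x (n + 1)| - |x n|) := by
        unfold dY
        have hnn : 0 ≤ rmax (fun j => |x j|) n := hn.trans h0
        split_ifs with h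
        · rw [one_mul, abs_of_nonneg h]
          exact mul_le_mul_of_nonneg_left (by linarith [le_abs_self (x (n + 1))]) hnn
        · rw [abs_of_neg (not_le.1 h)]
          have := mul_le_mul_of_nonneg_left (show -(x (n + 1) - x n) ≤ |x (n + 1)| - -x n by
            linarith [neg_abs_le (x (n + 1))]) hnn
          linarith
      have h2 : rmax (fun j => |x j|) (n + 1) = max (rmax (fun j => |x j|) n) |x (n + 1)| := rfl
      rw [h2]
      rcases le_total (rmax (fun j => |x j|) n) |x (n + 1)| with h | h
      · rw [max_eq_right h]; nlinarith
      · rw [max_eq_left h]; nlinarith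
  nlinarith [sq_abs (x n), sq_nonneg (rmax (fun j => |x j|) n - 2 * |x n|)]

lemma energy_path (x v w : ℕ → ℝ) (x0 : ℝ) (hx : ∀ k, x k = x0 + w k - v k)
    (hw : w 0 = 0) (n : ℕ) :
    w n ^ 2 = x n ^ 2 - x 0 ^ 2
      + 2 * ∑ k ∈ Finset.range n, x (k + 1) * (v (k + 1) - v k)
      + ∑ k ∈ Finset.range n, (v (k + 1) - v k) ^ 2
      + 2 * ∑ k ∈ Finset.range n, (v k - x0) * (w (k + 1) - w k) := by
  induction n with
  | zero => simp [hw]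
  | succ n ih =>
    simp only [Finset.sum_range_succ]
    have h1 := hx n
    have h2 := hx (n + 1)
    rw [h1] at ih
    rw [h2]
    linear_combination ih

/-- grid points -/
noncomputable def grid (n k : ℕ) : unitInterval :=
  Set.projIcc 0 1 zero_le_one ((k : ℝ) / ((n : ℝ) + 1))

lemma grid_mono (n : ℕ) : Monotone (grid n) := by
  intro a b h
  apply Set.monotone_projIcc
  gcongr

lemma grid_zero (n : ℕ) : grid n 0 = 0 := by
  simp only [grid, Nat.cast_zero, zero_div]
  exact Set.projIcc_left _

lemma grid_last (n : ℕ) : grid n (n + 1) = 1 := by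
  have : (((n + 1 : ℕ) : ℝ) / ((n : ℝ) + 1)) = 1 := by
    push_cast; exact div_self (by positivity)
  simp only [grid, this]
  exact Set.projIcc_right _

lemma grid_dist (n k : ℕ) (s : ℝ) (hs : |s - (k : ℝ) / ((n : ℝ) + 1)| ≤ 1 / ((n : ℝ) + 1)) :
    dist (Set.projIcc (0 : ℝ) 1 zero_le_one s) (grid n k) ≤ 1 / ((n : ℝ) + 1) := by
  refine le_trans ?_ hs
  rw [Subtype.dist_eq, Real.dist_eq, grid]
  exact Set.abs_projIcc_sub_projIcc _

lemma grid_dist_succ (n k : ℕ) : dist (grid n (k + 1)) (grid n k) ≤ 1 / ((n : ℝ) + 1) := by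
  apply grid_dist
  rw [← sub_div]
  push_cast
  rw [add_sub_cancel_left, abs_of_nonneg (by positivity)]

lemma tendsto_rmax_grid (f : unitInterval → ℝ) (hf : Continuous f) :
    Tendsto (fun n => rmax (fun k => f (grid n k)) (n + 1)) atTop (𝓝 (⨆ t, f t)) := by
  obtain ⟨t, -, ht⟩ := isCompact_univ.exists_isMaxOn (Set.univ_nonempty) hf.continuousOn
  have hmax : ∀ s, f s ≤ f t := fun s => ht (Set.mem_univ s)
  have hsup : (⨆ s, f s) = f t :=
    le_antisymm (ciSup_le hmax) (le_ciSup ⟨f t, by rintro _ ⟨s, rfl⟩; exact hmax s⟩ t)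
  rw [hsup]
  let κ : ℕ → ℕ := fun n => ⌊(t : ℝ) * ((n : ℝ) + 1)⌋₊
  have hκ : ∀ n, κ n ≤ n + 1 := by
    intro n
    apply Nat.floor_le_of_le
    push_cast
    nlinarith [t.2.2, t.2.1, (Nat.cast_nonneg n : (0 : ℝ) ≤ n)]
  have hlim : Tendsto (fun n => grid n (κ n)) atTop (𝓝 t) := by
    rw [tendsto_iff_dist_tendsto_zero]
    refine squeeze_zero (fun _ => dist_nonneg) (fun n => ?_) tendsto_one_div_add_atTop_nhds_zero_nat
    rw [dist_comm]
    have := grid_dist n (κ n) t ?_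
    · rwa [Set.projIcc_val] at this
    · have hp : (0 : ℝ) < (n : ℝ) + 1 := by positivity
      have h1 : ((κ n : ℕ) : ℝ) ≤ (t : ℝ) * ((n : ℝ) + 1) :=
        Nat.floor_le (mul_nonneg t.2.1 hp.le)
      have h2 : (t : ℝ) * ((n : ℝ) + 1) < (κ n : ℝ) + 1 := Nat.lt_floor_add_one _
      have : (t : ℝ) - (κ n : ℝ) / ((n : ℝ) + 1) =
          ((t : ℝ) * ((n : ℝ) + 1) - κ n) / ((n : ℝ) + 1) := by field_simp
      rw [this, abs_of_nonneg (div_nonneg (by linarith) hp.le)]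
      gcongr
      linarith
  have hlim2 : Tendsto (fun n => f (grid n (κ n))) atTop (𝓝 (f t)) :=
    (hf.tendsto t).comp hlim
  refine tendsto_of_tendsto_of_tendsto_of_le_of_le hlim2 tendsto_const_nhds ?_ ?_
  · intro n
    exact le_rmax (fun k => f (grid n k)) (hκ n)
  · intro n
    exact rmax_le _ fun k _ => hmax _

lemma sum_abs_le (v a b : ℕ → ℝ) (hv : ∀ k, v k = a k - b k) (ha : Monotone a) (hb : Monotone b)
    (ha0 : a 0 = 0) (hb0 : b 0 = 0) (n : ℕ) :
    ∑ k ∈ Finset.range n, |v (k + 1) - v k| ≤ a n + b n := by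
  induction n with
  | zero => simp [ha0, hb0]
  | succ n ih =>
    rw [Finset.sum_range_succ]
    have h1 := ha (Nat.le_succ n)
    have h2 := hb (Nat.le_succ n)
    have : |v (n + 1) - v n| ≤ (a (n + 1) - a n) + (b (n + 1) - b n) := by
      rw [hv, hv, abs_le]
      simp only [Nat.succ_eq_add_one] at h1 h2
      constructor <;> linarith
    linarith

lemma tendsto_qv (a b : unitInterval → ℝ) (ha : Monotone a) (hb : Monotone b)
    (ca : Continuous a) (cb : Continuous b) (ha0 : a 0 = 0) (hb0 : b 0 = 0) :
    Tendsto (fun n => ∑ k ∈ Finset.range (n + 1),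
      ((a (grid n (k + 1)) - b (grid n (k + 1))) - (a (grid n k) - b (grid n k))) ^ 2)
      atTop (𝓝 0) := by
  have hu : UniformContinuous (fun t => a t - b t) :=
    CompactSpace.uniformContinuous_of_continuous (ca.sub cb)
  have hR : 0 ≤ a 1 + b 1 := by
    have := ha (unitInterval.nonneg' (t := 1)); have := hb (unitInterval.nonneg' (t := 1)); linarith
  rw [Metric.tendsto_atTop]
  intro ε hε
  obtain ⟨δ, hδ, hd⟩ := Metric.uniformContinuous_iff.1 hu (ε / (a 1 + b 1 + 1)) (by positivity)
  obtain ⟨N, hN⟩ := exists_nat_one_div_lt hδ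
  refine ⟨N, fun n hn => ?_⟩
  rw [Real.dist_eq, sub_zero, abs_of_nonneg (Finset.sum_nonneg fun _ _ => sq_nonneg _)]
  have hs := sum_abs_le (fun k => a (grid n k) - b (grid n k)) (fun k => a (grid n k))
    (fun k => b (grid n k)) (fun _ => rfl) (ha.comp (grid_mono n)) (hb.comp (grid_mono n))
    (by simp [grid_zero, ha0]) (by simp [grid_zero, hb0]) (n + 1)
  simp only [grid_last] at hs
  calc _ ≤ ∑ k ∈ Finset.range (n + 1), (ε / (a 1 + b 1 + 1)) *
      |(a (grid n (k + 1)) - b (grid n (k + 1))) - (a (grid n k) - b (grid n k))| := by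
        refine Finset.sum_le_sum fun k _ => ?_
        rw [← sq_abs, sq]
        refine mul_le_mul_of_nonneg_right ?_ (abs_nonneg _)
        have hlt : dist (grid n (k + 1)) (grid n k) < δ := by
          refine (grid_dist_succ n k).trans_lt (lt_of_le_of_lt ?_ hN)
          gcongr
        have := hd hlt
        rw [Real.dist_eq] at this
        exact this.le
    _ ≤ (ε / (a 1 + b 1 + 1)) * (a 1 + b 1) := by
        rw [← Finset.mul_sum]
        exact mul_le_mul_of_nonneg_left hs (by positivity)
    _ < ε := by
        rw [div_mul_eq_mul_div, div_lt_iff₀ (by positivity)]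
        nlinarith

section prob

variable {Ω : Type} {𝒢 : MeasurableSpace Ω} {P : Measure Ω}

lemma memLp_rmax (f : ℕ → Ω → ℝ) (hf : ∀ k, MemLp (f k) 2 P) (n : ℕ) :
    MemLp (fun ω => rmax (fun k => f k ω) n) 2 P := by
  induction n with
  | zero => exact hf 0
  | succ n ih => exact ih.sup (hf (n + 1))

lemma measurable_rmax {m : MeasurableSpace Ω} (f : ℕ → Ω → ℝ) (n : ℕ)
    (hf : ∀ k ≤ n, Measurable[m] (f k)) :
    Measurable[m] (fun ω => rmax (fun k => f k ω) n) := by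
  induction n with
  | zero => exact hf 0 le_rfl
  | succ n ih => exact (ih fun k hk => hf k (by omega)).max (hf (n + 1) le_rfl)

lemma orth [IsProbabilityMeasure P] {F : Filtration unitInterval 𝒢} {N : unitInterval → Ω → ℝ}
    (hN : Martingale N F P) (hL : ∀ t, MemLp (N t) 2 P) {s t : unitInterval} (hst : s ≤ t)
    {Y : Ω → ℝ} (hY : Measurable[F s] Y) (hY2 : MemLp Y 2 P) :
    Integrable (fun ω => Y ω * (N t ω - N s ω)) P ∧ ∫ ω, Y ω * (N t ω - N s ω) ∂P = 0 := by
  have hI : Integrable (Y * (N t - N s)) P := hY2.integrable_mul ((hL t).sub (hL s))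
  refine ⟨hI, ?_⟩
  have h1 : P[Y * (N t - N s) | F s] =ᵐ[P] Y * P[N t - N s | F s] :=
    condExp_mul_of_stronglyMeasurable_left hY.stronglyMeasurable hI
      ((hN.integrable t).sub (hN.integrable s))
  have h2 : P[N t - N s | F s] =ᵐ[P] P[N t | F s] - P[N s | F s] :=
    condExp_sub (hN.integrable t) (hN.integrable s) _
  have h3 := hN.2 s t hst
  have h4 := hN.2 s s le_rfl
  have h5 : P[Y * (N t - N s) | F s] =ᵐ[P] 0 := by
    filter_upwards [h1, h2, h3, h4] with ω a b c d
    simp [a, b, c, d]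
  have h6 := integral_condExp (μ := P) (f := Y * (N t - N s)) (F.le s)
  rw [integral_congr_ae h5] at h6
  simpa using h6.symm

lemma orth_sum [IsProbabilityMeasure P] {F : Filtration unitInterval 𝒢}
    {N : unitInterval → Ω → ℝ}
    (hN : Martingale N F P) (hL : ∀ t, MemLp (N t) 2 P) {τ : ℕ → unitInterval} (hτ : Monotone τ)
    {Y : ℕ → Ω → ℝ} (hY : ∀ k, Measurable[F (τ k)] (Y k)) (hY2 : ∀ k, MemLp (Y k) 2 P) (n : ℕ) :
    Integrable (fun ω => ∑ k ∈ Finset.range n, Y k ω * (N (τ (k + 1)) ω - N (τ k) ω)) P ∧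
    ∫ ω, ∑ k ∈ Finset.range n, Y k ω * (N (τ (k + 1)) ω - N (τ k) ω) ∂P = 0 := by
  have h := fun k => orth hN hL (hτ (Nat.le_succ k)) (hY k) (hY2 k)
  refine ⟨integrable_finsetSum _ fun k _ => (h k).1, ?_⟩
  rw [integral_finsetSum _ fun k _ => (h k).1]
  exact Finset.sum_eq_zero fun k _ => (h k).2

lemma doob [IsProbabilityMeasure P] {F : Filtration unitInterval 𝒢}
    {N : unitInterval → Ω → ℝ}
    (hN : Martingale N F P) (hL : ∀ t, MemLp (N t) 2 P) {τ : ℕ → unitInterval} (hτ : Monotone τ)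
    (n : ℕ) :
    Integrable (fun ω => rmax (fun k => |N (τ k) ω|) n ^ 2) P ∧
    ∫ ω, rmax (fun k => |N (τ k) ω|) n ^ 2 ∂P ≤ 4 * ∫ ω, N (τ n) ω ^ 2 ∂P := by
  have hm : ∀ k, MemLp (fun ω => rmax (fun k => |N (τ k) ω|) k) 2 P := fun k =>
    memLp_rmax (fun k ω => |N (τ k) ω|) (fun k => (hL (τ k)).abs) k
  have hNm : ∀ t, Measurable[F t] (N t) := fun t => (hN.1 t).measurable
  have hYm : ∀ k, Measurable[F (τ k)] (fun ω => dY (fun j => N (τ j) ω) k) := by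
    intro k
    unfold dY
    refine Measurable.mul ?_ ?_
    · exact Measurable.ite ((hNm (τ k)) measurableSet_Ici) measurable_const
        measurable_const
    · refine measurable_rmax (m := F (τ k)) (fun j ω => |N (τ j) ω|) k fun j hj => ?_
      exact measurable_abs.comp ((hNm (τ j)).mono (F.mono (hτ hj)) le_rfl)
  have hY2 : ∀ k, MemLp (fun ω => dY (fun j => N (τ j) ω) k) 2 P := by
    intro k
    refine (hm k).mono ((hYm k).mono (F.le _) le_rfl).aestronglyMeasurable (ae_of_all _ fun ω => ?_)
    simp only [dY, norm_mul]
    split_ifs <;> simp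
  obtain ⟨h1, h2⟩ := orth_sum hN hL hτ hYm hY2 n
  refine ⟨(hm n).integrable_sq, ?_⟩
  have hI := (hL (τ n)).integrable_sq
  calc _ ≤ ∫ ω, (4 * N (τ n) ω ^ 2 - 4 * ∑ k ∈ Finset.range n,
        dY (fun j => N (τ j) ω) k * (N (τ (k + 1)) ω - N (τ k) ω)) ∂P := by
        refine integral_mono (hm n).integrable_sq ((hI.const_mul 4).sub (h1.const_mul 4)) fun ω => ?_
        exact doob_path (fun j => N (τ j) ω) n
    _ = _ := by
        rw [integral_sub (hI.const_mul 4) (h1.const_mul 4), integral_const_mul, integral_const_mul,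
          h2, mul_zero, sub_zero]

lemma cauchy_schwarz {f g : Ω → ℝ} (hf0 : ∀ ω, 0 ≤ f ω) (hg0 : ∀ ω, 0 ≤ g ω)
    (hf : MemLp f 2 P) (hg : MemLp g 2 P) :
    ∫ ω, f ω * g ω ∂P ≤ Real.sqrt (∫ ω, f ω ^ 2 ∂P) * Real.sqrt (∫ ω, g ω ^ 2 ∂P) := by
  have := integral_mul_le_Lp_mul_Lq_of_nonneg (μ := P) Real.HolderConjugate.two_two
    (ae_of_all _ hf0) (ae_of_all _ hg0) (by simpa using hf) (by simpa using hg)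
  simpa [Real.sqrt_eq_rpow] using this

end prob

lemma main_ineq {Ω : Type} {𝒢 : MeasurableSpace Ω} {P : Measure Ω} [IsProbabilityMeasure P]
    {F : Filtration unitInterval 𝒢} {M₀ : Ω → ℝ} {N A B X : unitInterval → Ω → ℝ}
    (hM₀ : Measurable[F 0] M₀) (hM₀2 : MemLp M₀ 2 P)
    (hN : Martingale N F P) (hNc : ∀ ω, Continuous fun t => N t ω) (hN0 : ∀ ω, N 0 ω = 0)
    (hL : ∀ t, MemLp (N t) 2 P)
    (hA : Adapted F A) (hB : Adapted F B)
    (cA : ∀ ω, Continuous fun t => A t ω) (cB : ∀ ω, Continuous fun t => B t ω)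
    (mA : ∀ ω, Monotone fun t => A t ω) (mB : ∀ ω, Monotone fun t => B t ω)
    (A0 : ∀ ω, A 0 ω = 0) (B0 : ∀ ω, B 0 ω = 0)
    (hA2 : MemLp (A 1) 2 P) (hB2 : MemLp (B 1) 2 P)
    (hX : ∀ t ω, X t ω = M₀ ω + N t ω - (A t ω - B t ω))
    (G : Ω → ℝ) (hG : Integrable G P) (hXG : ∀ t ω, X t ω ^ 2 ≤ G ω) :
    (∫ ω, N 1 ω ^ 2 ∂P) + (∫ ω, (⨆ t : unitInterval, (A t ω - B t ω) ^ 2) ∂P) ≤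
      26 * ((∫ ω, (⨆ t : unitInterval, X t ω ^ 2) ∂P) +
        Real.sqrt (∫ ω, (⨆ t : unitInterval, X t ω ^ 2) ∂P) *
          (Real.sqrt (∫ ω, A 1 ω ^ 2 ∂P) + Real.sqrt (∫ ω, B 1 ω ^ 2 ∂P))) := by
  have nA : ∀ t ω, 0 ≤ A t ω := fun t ω => by
    have := mA ω (unitInterval.nonneg' (t := t)); simp only [A0] at this; exact this
  have nB : ∀ t ω, 0 ≤ B t ω := fun t ω => by
    have := mB ω (unitInterval.nonneg' (t := t)); simp only [B0] at this; exact this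
  have lA : ∀ t ω, A t ω ≤ A 1 ω := fun t ω => mA ω (unitInterval.le_one' (t := t))
  have lB : ∀ t ω, B t ω ≤ B 1 ω := fun t ω => mB ω (unitInterval.le_one' (t := t))
  have gA : ∀ t, Measurable (A t) := fun t => (hA t).mono (F.le t) le_rfl
  have gB : ∀ t, Measurable (B t) := fun t => (hB t).mono (F.le t) le_rfl
  have gN : ∀ t, Measurable (N t) := fun t => (hN.1 t).measurable.mono (F.le t) le_rfl
  have gM : Measurable M₀ := hM₀.mono (F.le 0) le_rfl
  have gX : ∀ t, Measurable (X t) := fun t => by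
    have : X t = fun ω => M₀ ω + N t ω - (A t ω - B t ω) := funext (hX t)
    rw [this]
    exact (gM.add (gN t)).sub ((gA t).sub (gB t))
  have cX : ∀ ω, Continuous fun t => X t ω := fun ω => by
    simp only [hX]
    exact (continuous_const.add (hNc ω)).sub ((cA ω).sub (cB ω))
  -- the supremum of X
  set Z : Ω → ℝ := fun ω => ⨆ t : unitInterval, X t ω ^ 2 with hZdef
  have bX : ∀ ω, BddAbove (Set.range fun t : unitInterval => X t ω ^ 2) := fun ω =>
    ⟨G ω, by rintro _ ⟨t, rfl⟩; exact hXG t ω⟩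
  have hXZ : ∀ t ω, X t ω ^ 2 ≤ Z ω := fun t ω => le_ciSup (bX ω) t
  have hZ0 : ∀ ω, 0 ≤ Z ω := fun ω => (sq_nonneg _).trans (hXZ 0 ω)
  have hZm : Measurable Z := by
    refine measurable_of_tendsto_metrizable
      (f := fun n ω => rmax (fun k => X (grid n k) ω ^ 2) (n + 1)) ?_ ?_
    · intro n
      exact measurable_rmax (fun k ω => X (grid n k) ω ^ 2) (n + 1) fun k _ => (gX _).pow_const 2
    · rw [tendsto_pi_nhds]
      intro ω
      exact tendsto_rmax_grid (fun t => X t ω ^ 2) ((cX ω).pow 2)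
  have hZi : Integrable Z P := by
    refine hG.mono' hZm.aestronglyMeasurable (ae_of_all _ fun ω => ?_)
    rw [Real.norm_of_nonneg (hZ0 ω)]
    exact ciSup_le fun t => hXG t ω
  have hsq2 : ∀ ω, Real.sqrt (Z ω) ^ 2 = Z ω := fun ω => Real.sq_sqrt (hZ0 ω)
  have hsqL : MemLp (fun ω => Real.sqrt (Z ω)) 2 P := by
    rw [memLp_two_iff_integrable_sq hZm.sqrt.aestronglyMeasurable]
    simpa only [hsq2] using hZi
  have hXs : ∀ t ω, |X t ω| ≤ Real.sqrt (Z ω) := fun t ω => by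
    rw [← Real.sqrt_sq_eq_abs]; exact Real.sqrt_le_sqrt (hXZ t ω)
  -- the process V
  have hVL : ∀ t, MemLp (fun ω => A t ω - B t ω) 2 P := fun t => by
    refine (hA2.add hB2).mono ((gA t).sub (gB t)).aestronglyMeasurable (ae_of_all _ fun ω => ?_)
    simp only [Pi.add_apply, Real.norm_eq_abs]
    rw [abs_of_nonneg (add_nonneg (nA 1 ω) (nB 1 ω)), abs_le]
    constructor <;> linarith [nA t ω, nB t ω, lA t ω, lB t ω]
  have hVR : ∀ t ω, (A t ω - B t ω) ^ 2 ≤ (A 1 ω + B 1 ω) ^ 2 := fun t ω => by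
    apply sq_le_sq'
    · linarith [nA t ω, nB t ω, lA t ω, lB t ω]
    · linarith [nA t ω, nB t ω, lA t ω, lB t ω]
  have hRi : Integrable (fun ω => (A 1 ω + B 1 ω) ^ 2) P := (hA2.add hB2).integrable_sq
  have hN1i : Integrable (fun ω => N 1 ω ^ 2) P := (hL 1).integrable_sq
  -- quadratic variation of V on the grid
  let Q : ℕ → Ω → ℝ := fun n ω => ∑ k ∈ Finset.range (n + 1),
      ((A (grid n (k + 1)) ω - B (grid n (k + 1)) ω) - (A (grid n k) ω - B (grid n k) ω)) ^ 2
  have hS : ∀ n ω, ∑ k ∈ Finset.range (n + 1),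
      |(A (grid n (k + 1)) ω - B (grid n (k + 1)) ω) - (A (grid n k) ω - B (grid n k) ω)|
      ≤ A 1 ω + B 1 ω := fun n ω => by
    have hs := sum_abs_le (fun k => A (grid n k) ω - B (grid n k) ω) (fun k => A (grid n k) ω)
      (fun k => B (grid n k) ω) (fun _ => rfl) ((mA ω).comp (grid_mono n))
      ((mB ω).comp (grid_mono n))
      (by simp [grid_zero, A0]) (by simp [grid_zero, B0]) (n + 1)
    simpa only [grid_last] using hs
  have hQ0 : ∀ n ω, 0 ≤ Q n ω := fun n ω => Finset.sum_nonneg fun _ _ => sq_nonneg _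
  have hQR : ∀ n ω, Q n ω ≤ (A 1 ω + B 1 ω) ^ 2 := fun n ω => by
    have h0 : 0 ≤ A 1 ω + B 1 ω := add_nonneg (nA 1 ω) (nB 1 ω)
    calc Q n ω = ∑ k ∈ Finset.range (n + 1),
      |(A (grid n (k + 1)) ω - B (grid n (k + 1)) ω) - (A (grid n k) ω - B (grid n k) ω)| ^ 2 := by
          simp only [Q, sq_abs]
      _ ≤ (∑ k ∈ Finset.range (n + 1),
      |(A (grid n (k + 1)) ω - B (grid n (k + 1)) ω) - (A (grid n k) ω - B (grid n k) ω)|) ^ 2 :=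
          Finset.sum_sq_le_sq_sum_of_nonneg fun _ _ => abs_nonneg _
      _ ≤ _ := pow_le_pow_left₀ (Finset.sum_nonneg fun _ _ => abs_nonneg _) (hS n ω) 2
  have hQm : ∀ n, Measurable (Q n) := fun n =>
    Finset.measurable_fun_sum _ fun k _ =>
      ((((gA _).sub (gB _)).sub ((gA _).sub (gB _))).pow_const 2)
  have hQi : ∀ n, Integrable (Q n) P := fun n =>
    hRi.mono' (hQm n).aestronglyMeasurable (ae_of_all _ fun ω => by
      rw [Real.norm_of_nonneg (hQ0 n ω)]; exact hQR n ω)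
  have hQlim : Tendsto (fun n => ∫ ω, Q n ω ∂P) atTop (𝓝 0) := by
    have := tendsto_integral_of_dominated_convergence (μ := P) (F := Q) (f := fun _ => (0 : ℝ))
      (fun ω => (A 1 ω + B 1 ω) ^ 2) (fun n => (hQm n).aestronglyMeasurable) hRi
      (fun n => ae_of_all _ fun ω => by
        rw [Real.norm_of_nonneg (hQ0 n ω)]; exact hQR n ω)
      (ae_of_all _ fun ω => tendsto_qv (fun t => A t ω) (fun t => B t ω) (mA ω) (mB ω)
        (cA ω) (cB ω) (A0 ω) (B0 ω))
    simpa using this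
  have hZAi : Integrable (fun ω => Real.sqrt (Z ω) * A 1 ω) P := hsqL.integrable_mul hA2
  have hZBi : Integrable (fun ω => Real.sqrt (Z ω) * B 1 ω) P := hsqL.integrable_mul hB2
  -- energy estimate on the grid
  have hE : ∀ n, ∫ ω, N 1 ω ^ 2 ∂P ≤ (∫ ω, Z ω ∂P) + 2 * ((∫ ω, Real.sqrt (Z ω) * A 1 ω ∂P) +
      ∫ ω, Real.sqrt (Z ω) * B 1 ω ∂P) + ∫ ω, Q n ω ∂P := by
    intro n
    have hYm : ∀ k, Measurable[F (grid n k)]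
        (fun ω => (A (grid n k) ω - B (grid n k) ω) - M₀ ω) := fun k =>
      Measurable.sub (Measurable.sub (m := F (grid n k)) (f := A (grid n k)) (g := B (grid n k))
        (hA (grid n k)) (hB (grid n k))) (hM₀.mono (F.mono unitInterval.nonneg') le_rfl)
    obtain ⟨h1, h2⟩ := orth_sum hN hL (grid_mono n) hYm (fun k => (hVL _).sub hM₀2) (n + 1)
    have hp : ∀ ω, N 1 ω ^ 2 ≤ Z ω + 2 * (Real.sqrt (Z ω) * A 1 ω + Real.sqrt (Z ω) * B 1 ω)
        + Q n ω + 2 * ∑ k ∈ Finset.range (n + 1), ((A (grid n k) ω - B (grid n k) ω) - M₀ ω) *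
          (N (grid n (k + 1)) ω - N (grid n k) ω) := by
      intro ω
      have he := energy_path (fun k => X (grid n k) ω) (fun k => A (grid n k) ω - B (grid n k) ω)
        (fun k => N (grid n k) ω) (M₀ ω) (fun k => hX _ _) (by simp [grid_zero, hN0]) (n + 1)
      simp only [grid_last] at he
      have hb : ∑ k ∈ Finset.range (n + 1), X (grid n (k + 1)) ω *
          ((A (grid n (k + 1)) ω - B (grid n (k + 1)) ω) - (A (grid n k) ω - B (grid n k) ω))
          ≤ Real.sqrt (Z ω) * (A 1 ω + B 1 ω) := by
        refine le_trans (Finset.sum_le_sum (g := fun k => Real.sqrt (Z ω) *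
          |(A (grid n (k + 1)) ω - B (grid n (k + 1)) ω) - (A (grid n k) ω - B (grid n k) ω)|)
          fun k _ => ?_) ?_
        · refine (le_abs_self _).trans ?_
          rw [abs_mul]
          exact mul_le_mul_of_nonneg_right (hXs _ _) (abs_nonneg _)
        · rw [← Finset.mul_sum]
          exact mul_le_mul_of_nonneg_left (hS n ω) (Real.sqrt_nonneg _)
      have hx1 := hXZ 1 ω
      have hx0 := sq_nonneg (X (grid n 0) ω)
      simp only [Q]
      linarith
    have i1 := (hZAi.add hZBi).const_mul 2
    have i2 := hZi.add i1
    have i3 := i2.add (hQi n)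
    have i4 := h1.const_mul 2
    have hm := integral_mono hN1i (i3.add i4) hp
    rw [integral_add' i3 i4, integral_add' i2 (hQi n), integral_add' hZi i1, integral_const_mul,
      integral_const_mul, h2, mul_zero, add_zero, integral_add' hZAi hZBi] at hm
    exact hm
  have hE' : ∫ ω, N 1 ω ^ 2 ∂P ≤ (∫ ω, Z ω ∂P) + 2 * ((∫ ω, Real.sqrt (Z ω) * A 1 ω ∂P) +
      ∫ ω, Real.sqrt (Z ω) * B 1 ω ∂P) := by
    have := ge_of_tendsto' (hQlim.const_add ((∫ ω, Z ω ∂P) +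
      2 * ((∫ ω, Real.sqrt (Z ω) * A 1 ω ∂P) + ∫ ω, Real.sqrt (Z ω) * B 1 ω ∂P))) hE
    simpa using this
  have csA := cauchy_schwarz (P := P) (fun ω => Real.sqrt_nonneg (Z ω)) (nA 1) hsqL hA2
  have csB := cauchy_schwarz (P := P) (fun ω => Real.sqrt_nonneg (Z ω)) (nB 1) hsqL hB2
  simp only [hsq2] at csA csB
  -- sup of V
  have hD : ∀ n, ∫ ω, rmax (fun k => (A (grid n k) ω - B (grid n k) ω) ^ 2) (n + 1) ∂P ≤
      6 * (∫ ω, Z ω ∂P) + 3 * (4 * ∫ ω, N 1 ω ^ 2 ∂P) := by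
    intro n
    obtain ⟨d1, d2⟩ := doob hN hL (grid_mono n) (n + 1)
    rw [grid_last] at d2
    have hle : ∫ ω, rmax (fun k => (A (grid n k) ω - B (grid n k) ω) ^ 2) (n + 1) ∂P ≤
        ∫ ω, (6 * Z ω + 3 * rmax (fun k => |N (grid n k) ω|) (n + 1) ^ 2) ∂P := by
      refine integral_mono_of_nonneg (ae_of_all _ fun ω => ?_)
        ((hZi.const_mul 6).add (d1.const_mul 3)) (ae_of_all _ fun ω => ?_)
      · exact (sq_nonneg _).trans (le_rmax (fun k => (A (grid n k) ω - B (grid n k) ω) ^ 2)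
          (Nat.zero_le (n + 1)))
      · refine rmax_le _ fun k hk => ?_
        have e1 : |N (grid n k) ω| ≤ rmax (fun k => |N (grid n k) ω|) (n + 1) :=
          le_rmax (fun k => |N (grid n k) ω|) hk
        have e2 : N (grid n k) ω ^ 2 ≤ rmax (fun k => |N (grid n k) ω|) (n + 1) ^ 2 := by
          rw [← sq_abs]; exact pow_le_pow_left₀ (abs_nonneg _) e1 2
        have e3 := hXZ 0 ω
        have e4 := hXZ (grid n k) ω
        have e5 : A (grid n k) ω - B (grid n k) ω =
            X 0 ω + N (grid n k) ω - X (grid n k) ω := by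
          rw [hX, hX, hN0, A0, B0]; ring
        simp only [e5]
        nlinarith [sq_nonneg (X 0 ω - N (grid n k) ω), sq_nonneg (X 0 ω + X (grid n k) ω),
          sq_nonneg (N (grid n k) ω + X (grid n k) ω)]
    rw [integral_add (hZi.const_mul 6) (d1.const_mul 3), integral_const_mul,
      integral_const_mul] at hle
    linarith
  have hDlim : Tendsto (fun n => ∫ ω, rmax (fun k => (A (grid n k) ω - B (grid n k) ω) ^ 2)
      (n + 1) ∂P) atTop (𝓝 (∫ ω, (⨆ t : unitInterval, (A t ω - B t ω) ^ 2) ∂P)) := by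
    refine tendsto_integral_of_dominated_convergence (fun ω => (A 1 ω + B 1 ω) ^ 2) ?_ hRi ?_ ?_
    · intro n
      exact (measurable_rmax (fun k ω => (A (grid n k) ω - B (grid n k) ω) ^ 2) (n + 1)
        fun k _ => ((gA _).sub (gB _)).pow_const 2).aestronglyMeasurable
    · intro n
      refine ae_of_all _ fun ω => ?_
      rw [Real.norm_of_nonneg ((sq_nonneg _).trans (le_rmax
        (fun k => (A (grid n k) ω - B (grid n k) ω) ^ 2) (Nat.zero_le (n + 1))))]
      exact rmax_le _ fun k _ => hVR _ ω
    · exact ae_of_all _ fun ω => tendsto_rmax_grid (fun t => (A t ω - B t ω) ^ 2)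
        (((cA ω).sub (cB ω)).pow 2)
  have hfin := le_of_tendsto' hDlim hD
  have hZnn : 0 ≤ ∫ ω, Z ω ∂P := integral_nonneg hZ0
  linarith

end Aux15


/-- there is a universal constant `C` such that for any two decompositions
`M^i_t = M₀^i + N^i_t − K^i_t` (with `N^i` square-integrable continuous martingales
started at `0` and `K^i` continuous nondecreasing adapted square-integrable processes
started at `0`), writing `δM, δN, δK` for the differences,
`E[(δN₁)²] + E[sup_t (δK_t)²] ≤ C (E[sup_t (δM_t)²] + E[sup_t (δM_t)²]^{1/2}
  (E[(K₁¹)²]^{1/2} + E[(K₁²)²]^{1/2}))`. -/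
theorem stmt_15 : ∃ C : ℝ, 0 < C ∧
    ∀ (Ω : Type) (𝒢 : MeasurableSpace Ω) (P : Measure Ω), IsProbabilityMeasure P →
    ∀ (F : Filtration unitInterval 𝒢)
      (M₀ : Fin 2 → Ω → ℝ) (N K M : Fin 2 → unitInterval → Ω → ℝ),
      (∀ i, Measurable[F 0] (M₀ i)) →
      (∀ i, Integrable (fun ω => M₀ i ω ^ 2) P) →
      (∀ i, Martingale (N i) F P) →
      (∀ i ω, Continuous fun t => N i t ω) →
      (∀ i ω, N i 0 ω = 0) →
      (∀ i t, Integrable (fun ω => N i t ω ^ 2) P) →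
      (∀ i, Adapted F (K i)) →
      (∀ i ω, Continuous fun t => K i t ω) →
      (∀ i ω, Monotone fun t => K i t ω) →
      (∀ i ω, K i 0 ω = 0) →
      (∀ i, Integrable (fun ω => K i 1 ω ^ 2) P) →
      (∀ i t ω, M i t ω = M₀ i ω + N i t ω - K i t ω) →
      (∀ i, Integrable (fun ω => ⨆ t : unitInterval, M i t ω ^ 2) P) →
      (∫ ω, (N 0 1 ω - N 1 1 ω) ^ 2 ∂P) +
          (∫ ω, (⨆ t : unitInterval, (K 0 t ω - K 1 t ω) ^ 2) ∂P) ≤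
        C * ((∫ ω, (⨆ t : unitInterval, (M 0 t ω - M 1 t ω) ^ 2) ∂P) +
          Real.sqrt (∫ ω, (⨆ t : unitInterval, (M 0 t ω - M 1 t ω) ^ 2) ∂P) *
            (Real.sqrt (∫ ω, K 0 1 ω ^ 2 ∂P) + Real.sqrt (∫ ω, K 1 1 ω ^ 2 ∂P))) := by
  refine ⟨26, by norm_num, ?_⟩
  intro Ω 𝒢 P hP F M₀ N K M hM₀ hM₀2 hN hNc hN0 hN2 hK cK mK K0 hK2 hM hMi
  have gN : ∀ i t, Measurable (N i t) := fun i t =>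
    ((hN i).1 t).measurable.mono (F.le t) le_rfl
  have gK : ∀ i t, Measurable (K i t) := fun i t => (hK i t).mono (F.le t) le_rfl
  have gM : ∀ i, Measurable (M₀ i) := fun i => (hM₀ i).mono (F.le 0) le_rfl
  have lN : ∀ i t, MemLp (N i t) 2 P := fun i t =>
    (memLp_two_iff_integrable_sq (gN i t).aestronglyMeasurable).2 (hN2 i t)
  have lK : ∀ i, MemLp (K i 1) 2 P := fun i =>
    (memLp_two_iff_integrable_sq (gK i 1).aestronglyMeasurable).2 (hK2 i)
  have lM : ∀ i, MemLp (M₀ i) 2 P := fun i =>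
    (memLp_two_iff_integrable_sq (gM i).aestronglyMeasurable).2 (hM₀2 i)
  have cM : ∀ i ω, Continuous fun t => M i t ω := fun i ω => by
    simp only [hM]
    exact (continuous_const.add (hNc i ω)).sub (cK i ω)
  have bM : ∀ i ω t, M i t ω ^ 2 ≤ ⨆ t : unitInterval, M i t ω ^ 2 := fun i ω t =>
    le_ciSup (f := fun t : unitInterval => M i t ω ^ 2)
      (isCompact_range ((cM i ω).pow 2)).bddAbove t
  exact Aux15.main_ineq (F := F) (M₀ := fun ω => M₀ 0 ω - M₀ 1 ω)
    (N := fun t ω => N 0 t ω - N 1 t ω) (A := K 0) (B := K 1)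
    (X := fun t ω => M 0 t ω - M 1 t ω)
    ((hM₀ 0).sub (hM₀ 1)) ((lM 0).sub (lM 1)) ((hN 0).sub (hN 1))
    (fun ω => (hNc 0 ω).sub (hNc 1 ω)) (fun ω => by simp [hN0])
    (fun t => (lN 0 t).sub (lN 1 t)) (hK 0) (hK 1) (cK 0) (cK 1) (mK 0) (mK 1) (K0 0) (K0 1)
    (lK 0) (lK 1) (fun t ω => by simp only [hM]; ring)
    (fun ω => 2 * (⨆ t : unitInterval, M 0 t ω ^ 2) + 2 * (⨆ t : unitInterval, M 1 t ω ^ 2))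
    (((hMi 0).const_mul 2).add ((hMi 1).const_mul 2))
    (fun t ω => by nlinarith [bM 0 ω t, bM 1 ω t, sq_nonneg (M 0 t ω + M 1 t ω)])
end
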